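/- arXiv:1603.01078 — 4 statements merged into one kernel-verified Lean document; each statement's English description precedes it below -/
import Mathlib

section
/- Let q be a positive integer. (a) For m = 2q+4, let S be the numerical semigroup generated by n_1 = m, n_2 = m+1, n_3 = (q+1)m−2, n_4 = (q+1)m−1; (b) for m = 2q+5, let S be the numerical semigroup generated by n_1 = m, n_2 = m+1, n_3 = (q+1)m+q+2, n_4 = (q+1)m+q+3. In both cases AP(S,n_i) is not a homogeneous set for any i = 1,2,3,4. Moreover, in case (b) one has (q+2)·n_2 = n_1 + n_3, so n_3 is a torsion element of S and T(S) ≠ ∅, i.e. the tangent cone of S is not Cohen–Macaulay. -/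
/-!
Write `F` for the integer `2qm + 2q + 1` in case (a) and `(2q + 1)m + 2q + 4` in case (b). It is a
gap of `S`: since `F < 2n₃`, a factorization of `F` would use at most one of `n₃`, `n₄`, but `F`,
`F - n₃` and `F - n₄` all fall strictly between two of the intervals `[km, k(m + 1)]` whose union
is the semigroup `⟨m, m + 1⟩`. Hence `nᵢ + F`, as soon as it is in `S`, lies in `AP(S, nᵢ)`, and for
every `i` it has two factorizations of different lengths. In case (b), `n₃` is a minimal generator,
so it has order `1`, whereas `n₁ + n₃ = (q + 2)n₂` has order at least `q + 2 > 1 + 1`.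
-/

open scoped BigOperators

/-- The value `Σ aᵢ nᵢ` of a tuple of coefficients `a` w.r.t. the generators `n`. -/
def sval {d : ℕ} (n : Fin d → ℕ) (a : Fin d → ℕ) : ℕ := ∑ i, a i * n i

/-- The total length `Σ aᵢ` of a factorization. -/
def tlen {d : ℕ} (a : Fin d → ℕ) : ℕ := ∑ i, a i

/-- The submonoid of `ℕ` generated by `n`. -/
def gen {d : ℕ} (n : Fin d → ℕ) : Set ℕ := {s : ℕ | ∃ a : Fin d → ℕ, s = sval n a}

/-- The Apéry set of the semigroup generated by `n` with respect to `s`: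
elements `x` of the semigroup such that `x - s` is not in the semigroup. -/
def Apery {d : ℕ} (n : Fin d → ℕ) (s : ℕ) : Set ℕ :=
  {x : ℕ | x ∈ gen n ∧ ¬ ∃ y ∈ gen n, x = s + y}

/-- A subset `T` is homogeneous if every nonzero element of `T` has all its
factorizations of the same length. -/
def HomogSet {d : ℕ} (n : Fin d → ℕ) (T : Set ℕ) : Prop :=
  ∀ t ∈ T, t ≠ 0 → ∀ a b : Fin d → ℕ, sval n a = t → sval n b = t → tlen a = tlen b

/-- The order of `s`: the maximal length of a factorization of `s`. -/
noncomputable def ordS {d : ℕ} (n : Fin d → ℕ) (s : ℕ) : ℕ :=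
  sSup {l : ℕ | ∃ a : Fin d → ℕ, sval n a = s ∧ tlen a = l}

/-- The torsion set of the semigroup generated by `n`, with respect to the
generator of index `i0` (the smallest generator). -/
noncomputable def Torsion {d : ℕ} (n : Fin d → ℕ) (i0 : Fin d) : Set ℕ :=
  {s : ℕ | s ∈ gen n ∧ ∃ c : ℕ, 0 < c ∧ ordS n s + c < ordS n (s + c * n i0)}

/-- `n` is a minimal system of generators: any expression of a generator as a
nonnegative combination of the generators has total coefficient sum one. -/
def MinGen {d : ℕ} (n : Fin d → ℕ) : Prop :=
  ∀ r : Fin d, ∀ a : Fin d → ℕ, n r = sval n a → tlen a = 1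

/-- `n` generates a numerical semigroup (cofinite in `ℕ`). -/
def IsNumerical {d : ℕ} (n : Fin d → ℕ) : Prop := {x : ℕ | x ∉ gen n}.Finite

/-- The monomial `x^a = Π xᵢ^{aᵢ}`. -/
noncomputable def monom (k : Type*) [CommRing k] {d : ℕ} (a : Fin d → ℕ) :
    MvPolynomial (Fin d) k :=
  ∏ i, (MvPolynomial.X i : MvPolynomial (Fin d) k) ^ a i

/-- The toric ideal `I_S`: kernel of `k[x₁,…,x_d] → k[t]`, `xᵢ ↦ t^{nᵢ}`. -/
noncomputable def toricIdeal (k : Type*) [CommRing k] {d : ℕ} (n : Fin d → ℕ) :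
    Ideal (MvPolynomial (Fin d) k) :=
  RingHom.ker (MvPolynomial.aeval (R := k)
    (fun i => (Polynomial.X : Polynomial k) ^ n i)).toRingHom

/-- `E` is a minimal generating set of the ideal `I`: it spans `I` and no
proper subset spans `I`. -/
def IsMinGenSet {R : Type*} [CommRing R] (I : Ideal R) (E : Set R) : Prop :=
  Ideal.span E = I ∧ ∀ E' : Set R, E' ⊂ E → Ideal.span E' ≠ I

/-- Membership of an integer in the semigroup generated by `n`. -/
def memZ {d : ℕ} (n : Fin d → ℕ) (z : ℤ) : Prop := ∃ x ∈ gen n, (x : ℤ) = z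

/-- A numerical semigroup with Frobenius number `F = max (ℤ ∖ S)` is symmetric
if for every integer `z`, `z ∈ S ↔ F - z ∉ S`. -/
def IsSymmetric {d : ℕ} (n : Fin d → ℕ) : Prop :=
  ∃ F : ℤ, ¬ memZ n F ∧ (∀ z : ℤ, F < z → memZ n z) ∧
    ∀ z : ℤ, memZ n z ↔ ¬ memZ n (F - z)

/-- A numerical semigroup with Frobenius number `F = max (ℤ ∖ S)` is
pseudo-symmetric if `F` is even and for every integer `z`,
`z ∈ S ↔ (z ≠ F/2 ∧ F - z ∉ S)`. -/
def IsPseudoSymmetric {d : ℕ} (n : Fin d → ℕ) : Prop :=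
  ∃ F : ℤ, ¬ memZ n F ∧ (∀ z : ℤ, F < z → memZ n z) ∧ F % 2 = 0 ∧
    ∀ z : ℤ, memZ n z ↔ (z ≠ F / 2 ∧ ¬ memZ n (F - z))

/-- The generators `q·m₁,…,q·m_d, p·n₁,…,p·n_e` of the gluing of two numerical
semigroups. -/
def glueGen {d e : ℕ} (mg : Fin d → ℕ) (ng : Fin e → ℕ) (p q : ℕ) :
    Fin (d + e) → ℕ :=
  Fin.append (fun i => q * mg i) (fun i => p * ng i)
/-- The symmetric family of multiplicity `m = 2q+4`. -/
def symA (q : ℕ) : Fin 4 → ℕ :=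
  ![2 * q + 4, 2 * q + 5, (q + 1) * (2 * q + 4) - 2, (q + 1) * (2 * q + 4) - 1]

/-- The symmetric family of multiplicity `m = 2q+5`. -/
def symB (q : ℕ) : Fin 4 → ℕ :=
  ![2 * q + 5, 2 * q + 6, (q + 1) * (2 * q + 5) + q + 2,
    (q + 1) * (2 * q + 5) + q + 3]

section Factorizations

variable {d : ℕ} {n : Fin d → ℕ}

lemma sval_add (n a b : Fin d → ℕ) : sval n (a + b) = sval n a + sval n b :=
  add_dotProduct a b n

lemma sval_single (n : Fin d → ℕ) (i : Fin d) (c : ℕ) : sval n (Pi.single i c) = c * n i :=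
  single_dotProduct n c i

lemma tlen_add (a b : Fin d → ℕ) : tlen (a + b) = tlen a + tlen b :=
  Finset.sum_add_distrib

lemma tlen_single (i : Fin d) (c : ℕ) : tlen (Pi.single i c) = c :=
  Fintype.sum_pi_single' i c

lemma tlen_mul_le_sval {m : ℕ} (hm : ∀ i, m ≤ n i) (a : Fin d → ℕ) : tlen a * m ≤ sval n a := by
  rw [tlen, Finset.sum_mul]
  exact Finset.sum_le_sum fun i _ => Nat.mul_le_mul_left (a i) (hm i)

lemma sval_le_tlen_mul {M : ℕ} (hM : ∀ i, n i ≤ M) (a : Fin d → ℕ) : sval n a ≤ tlen a * M := by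
  rw [tlen, Finset.sum_mul]
  exact Finset.sum_le_sum fun i _ => Nat.mul_le_mul_left (a i) (hM i)

lemma tlen_le_sval (hn : ∀ i, 0 < n i) (a : Fin d → ℕ) : tlen a ≤ sval n a := by
  simpa using tlen_mul_le_sval hn a

lemma zero_mem_gen : 0 ∈ gen n :=
  ⟨0, (zero_dotProduct n).symm⟩

lemma apply_mem_gen (i : Fin d) : n i ∈ gen n :=
  ⟨Pi.single i 1, by rw [sval_single, one_mul]⟩

/- The elements with a factorization of length `k` lie in `[k * m, k * M]`; the hypotheses put `y`
strictly between `(k - 1) * M` and `k * m`. -/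
lemma notMem_gen_of_lt_of_lt {m M k y : ℕ} (hm : ∀ i, m ≤ n i) (hM : ∀ i, n i ≤ M)
    (hlower : k * M < y + M) (hupper : y < k * m) : y ∉ gen n := by
  rintro ⟨a, rfl⟩
  have hlen : tlen a < k :=
    Nat.lt_of_mul_lt_mul_right ((tlen_mul_le_sval hm a).trans_lt hupper)
  refine hlower.not_ge ?_
  calc sval n a + M ≤ tlen a * M + M := Nat.add_le_add_right (sval_le_tlen_mul hM a) M
    _ = (tlen a + 1) * M := (Nat.succ_mul _ _).symm
    _ ≤ k * M := Nat.mul_le_mul_right M hlen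

lemma not_homogSet_apery {s F : ℕ} {a b : Fin d → ℕ} (hF : F ∉ gen n) (ha : sval n a = s + F)
    (hb : sval n b = s + F) (hab : tlen a ≠ tlen b) : ¬ HomogSet n (Apery n s) := by
  intro hhom
  have hF0 : F ≠ 0 := fun h => hF (h ▸ zero_mem_gen)
  have hmem : s + F ∈ Apery n s := by
    refine ⟨⟨a, ha.symm⟩, ?_⟩
    rintro ⟨y, hy, hsy⟩
    exact hF (Nat.add_left_cancel hsy ▸ hy)
  exact hab (hhom (s + F) hmem (by omega) a b ha hb)

lemma tlen_le_ordS (hn : ∀ i, 0 < n i) (a : Fin d → ℕ) : tlen a ≤ ordS n (sval n a) := by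
  refine le_csSup ⟨sval n a, ?_⟩ ⟨a, rfl, rfl⟩
  rintro _ ⟨b, hb, rfl⟩
  exact hb ▸ tlen_le_sval hn b

lemma tlen_eq_one_of_sval_eq_apply {i : Fin d} {a : Fin d → ℕ} (hn : ∀ j, 0 < n j)
    (hai : a i ≠ 0) (ha : sval n a = n i) : tlen a = 1 := by
  have hle : Pi.single i 1 ≤ a := by
    simpa [Pi.single, update_le_iff] using Nat.one_le_iff_ne_zero.mpr hai
  obtain ⟨b, rfl⟩ := exists_add_of_le hle
  rw [sval_add, sval_single, one_mul, Nat.add_eq_left] at ha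
  have hb : tlen b = 0 := Nat.le_zero.mp (ha ▸ tlen_le_sval hn b)
  rw [tlen_add, tlen_single, hb]

lemma ordS_apply_le_one {i : Fin d} (hn : ∀ j, 0 < n j)
    (hmin : ∀ a, a i = 0 → sval n a ≠ n i) : ordS n (n i) ≤ 1 := by
  refine csSup_le' ?_
  rintro _ ⟨a, ha, rfl⟩
  exact (tlen_eq_one_of_sval_eq_apply hn (fun hai => hmin a hai ha) ha).le

lemma apply_mem_torsion {i i₀ : Fin d} {c : ℕ} {a : Fin d → ℕ} (hn : ∀ j, 0 < n j)
    (hmin : ∀ b, b i = 0 → sval n b ≠ n i) (hc : 0 < c) (ha : sval n a = n i + c * n i₀)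
    (hlen : 1 + c < tlen a) : n i ∈ Torsion n i₀ := by
  refine ⟨apply_mem_gen i, c, hc, ?_⟩
  calc ordS n (n i) + c ≤ 1 + c := Nat.add_le_add_right (ordS_apply_le_one hn hmin) c
    _ < tlen a := hlen
    _ ≤ ordS n (n i + c * n i₀) := ha ▸ tlen_le_ordS hn a

end Factorizations

section FourGenerators

lemma sval_four (n a : Fin 4 → ℕ) :
    sval n a = a 0 * n 0 + a 1 * n 1 + a 2 * n 2 + a 3 * n 3 :=
  Fin.sum_univ_four _

lemma tlen_four (a : Fin 4 → ℕ) : tlen a = a 0 + a 1 + a 2 + a 3 :=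
  Fin.sum_univ_four _

lemma add_mem_gen_pair (u v a b : ℕ) : a * u + b * v ∈ gen ![u, v] :=
  ⟨![a, b], (Fin.sum_univ_two fun i => ![a, b] i * ![u, v] i).symm⟩

lemma notMem_gen_pair {u v k y : ℕ} (huv : u ≤ v) (hlower : k * v < y + v)
    (hupper : y < k * u) : y ∉ gen ![u, v] :=
  notMem_gen_of_lt_of_lt (Fin.forall_fin_two.mpr ⟨le_rfl, huv⟩)
    (Fin.forall_fin_two.mpr ⟨huv, le_rfl⟩) hlower hupper

variable {u v w x : ℕ}

lemma mem_gen_pair_or_of_mem_gen_four {s : ℕ} (hwx : w ≤ x) (hs : s ∈ gen ![u, v, w, x])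
    (hsw : s < 2 * w) :
    s ∈ gen ![u, v] ∨ (∃ y ∈ gen ![u, v], s = w + y) ∨ ∃ y ∈ gen ![u, v], s = x + y := by
  obtain ⟨a, ha⟩ := hs
  simp only [sval_four, Matrix.cons_val] at ha
  have hle : (a 2 + a 3) * w ≤ s := by
    have hle₃ : a 3 * w ≤ a 3 * x := Nat.mul_le_mul_left (a 3) hwx
    linarith [Nat.zero_le (a 0 * u), Nat.zero_le (a 1 * v)]
  have hlt : a 2 + a 3 < 2 := Nat.lt_of_mul_lt_mul_right (hle.trans_lt hsw)
  have hy : a 0 * u + a 1 * v ∈ gen ![u, v] := add_mem_gen_pair u v (a 0) (a 1)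
  obtain ⟨h2, h3⟩ | ⟨h2, h3⟩ | ⟨h2, h3⟩ :
      (a 2 = 0 ∧ a 3 = 0) ∨ (a 2 = 1 ∧ a 3 = 0) ∨ (a 2 = 0 ∧ a 3 = 1) := by omega
  · exact .inl (by simpa [ha, h2, h3] using hy)
  · exact .inr (.inl ⟨_, hy, by rw [ha, h2, h3]; ring⟩)
  · exact .inr (.inr ⟨_, hy, by rw [ha, h2, h3]; ring⟩)

lemma sval_ne_third_of_notMem_gen_pair (hwx : w < x) (hw : w ∉ gen ![u, v]) (a : Fin 4 → ℕ)
    (h2 : a 2 = 0) : sval ![u, v, w, x] a ≠ w := by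
  intro ha
  simp only [sval_four, Matrix.cons_val, h2, zero_mul, add_zero] at ha
  have h3 : a 3 = 0 := by
    by_contra h
    have hle : x ≤ a 3 * x := Nat.le_mul_of_pos_left x (Nat.pos_of_ne_zero h)
    omega
  rw [h3, zero_mul, add_zero] at ha
  exact hw (ha ▸ add_mem_gen_pair u v (a 0) (a 1))

end FourGenerators

section FamilyA

lemma symA_eq (q : ℕ) : symA q =
    ![2 * q + 4, 2 * q + 5, q * (2 * q + 4) + (2 * q + 2), q * (2 * q + 4) + (2 * q + 3)] := by
  rw [symA, add_one_mul]
  rfl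

lemma notMem_gen_symA (q : ℕ) : 2 * q * (2 * q + 4) + (2 * q + 1) ∉ gen (symA q) := by
  rw [symA_eq]
  intro hF
  obtain hF | ⟨y, hy, hF⟩ | ⟨y, hy, hF⟩ :=
    mem_gen_pair_or_of_mem_gen_four (by omega) hF (by linarith)
  · exact notMem_gen_pair (k := 2 * q + 1) (by omega) (by linarith) (by linarith) hF
  · exact notMem_gen_pair (k := q) (by omega) (by linarith) (by linarith) hy
  · exact notMem_gen_pair (k := q) (by omega) (by linarith) (by linarith) hy

lemma not_homogSet_apery_symA {q : ℕ} (hq : 0 < q) (i : Fin 4) :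
    ¬ HomogSet (symA q) (Apery (symA q) (symA q i)) := by
  have hF := notMem_gen_symA q
  rw [symA_eq] at hF ⊢
  match i with
  | 0 =>
    refine not_homogSet_apery (a := ![0, 2 * q + 1, 0, 0]) (b := ![0, 0, 1, 1]) hF ?_ ?_ ?_ <;>
      simp only [sval_four, tlen_four, Matrix.cons_val] <;> grind
  | 1 =>
    refine not_homogSet_apery (a := ![q + 1, 0, 1, 0]) (b := ![0, 0, 0, 2]) hF ?_ ?_ ?_ <;>
      simp only [sval_four, tlen_four, Matrix.cons_val] <;> grind
  | 2 =>
    obtain ⟨p, rfl⟩ := Nat.exists_eq_add_of_le' hq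
    refine not_homogSet_apery (a := ![p + 3, 2 * p + 1, 0, 0]) (b := ![0, 2 * p + 2, 0, 1]) hF
      ?_ ?_ ?_ <;> simp only [sval_four, tlen_four, Matrix.cons_val] <;> grind
  | 3 =>
    refine not_homogSet_apery (a := ![q + 1, 2 * q, 0, 0]) (b := ![q, 0, 2, 0]) hF
      ?_ ?_ ?_ <;> simp only [sval_four, tlen_four, Matrix.cons_val] <;> grind

end FamilyA

section FamilyB

lemma notMem_gen_symB (q : ℕ) : (2 * q + 1) * (2 * q + 5) + (2 * q + 4) ∉ gen (symB q) := by
  intro hF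
  obtain hF | ⟨y, hy, hF⟩ | ⟨y, hy, hF⟩ :=
    mem_gen_pair_or_of_mem_gen_four (by omega) hF (by linarith)
  · exact notMem_gen_pair (k := 2 * q + 2) (by omega) (by linarith) (by linarith) hF
  · exact notMem_gen_pair (k := q + 1) (by omega) (by linarith) (by linarith) hy
  · exact notMem_gen_pair (k := q + 1) (by omega) (by linarith) (by linarith) hy

lemma not_homogSet_apery_symB {q : ℕ} (hq : 0 < q) (i : Fin 4) :
    ¬ HomogSet (symB q) (Apery (symB q) (symB q i)) := by
  have hF := notMem_gen_symB q
  match i with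
  | 0 =>
    refine not_homogSet_apery (a := ![0, q + 1, 0, 1]) (b := ![0, 0, 2, 0]) hF ?_ ?_ ?_ <;>
      simp only [symB, sval_four, tlen_four, Matrix.cons_val] <;> grind
  | 1 =>
    refine not_homogSet_apery (a := ![2 * q + 3, 0, 0, 0]) (b := ![0, 0, 1, 1]) hF ?_ ?_ ?_ <;>
      simp only [symB, sval_four, tlen_four, Matrix.cons_val] <;> grind
  | 2 =>
    refine not_homogSet_apery (a := ![2 * q + 2, q + 1, 0, 0]) (b := ![0, q, 0, 2]) hF
      ?_ ?_ ?_ <;> simp only [symB, sval_four, tlen_four, Matrix.cons_val] <;> grind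
  | 3 =>
    refine not_homogSet_apery (a := ![2 * q + 1, q + 2, 0, 0]) (b := ![2 * q + 2, 0, 1, 0]) hF
      ?_ ?_ ?_ <;> simp only [symB, sval_four, tlen_four, Matrix.cons_val] <;> grind

lemma mul_symB_one_eq_add (q : ℕ) : (q + 2) * symB q 1 = symB q 0 + symB q 2 := by
  simp only [symB, Matrix.cons_val]
  ring

lemma symB_pos (q : ℕ) (i : Fin 4) : 0 < symB q i := by
  fin_cases i <;> exact Nat.succ_pos _

lemma sval_symB_ne_symB_two (q : ℕ) (a : Fin 4 → ℕ) (h2 : a 2 = 0) :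
    sval (symB q) a ≠ symB q 2 :=
  sval_ne_third_of_notMem_gen_pair (by omega)
    (notMem_gen_pair (k := q + 2) (by omega) (by linarith) (by linarith)) a h2

lemma symB_two_mem_torsion {q : ℕ} (hq : 0 < q) : symB q 2 ∈ Torsion (symB q) 0 := by
  refine apply_mem_torsion (a := Pi.single 1 (q + 2)) (symB_pos q) (sval_symB_ne_symB_two q)
    one_pos ?_ ?_
  · rw [sval_single, mul_symB_one_eq_add, one_mul, add_comm]
  · rw [tlen_single]
    omega

end FamilyB

/-- for both symmetric families, no Apéry set `AP(S,nᵢ)` is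
homogeneous; in case (b), `(q+2)·n₂ = n₁ + n₃`, so `n₃` is a torsion element
and `T(S) ≠ ∅` (the tangent cone is not Cohen–Macaulay). -/
theorem statement11 (q : ℕ) (hq : 0 < q) :
    (∀ i : Fin 4, ¬ HomogSet (symA q) (Apery (symA q) (symA q i))) ∧
    (∀ i : Fin 4, ¬ HomogSet (symB q) (Apery (symB q) (symB q i))) ∧
    (q + 2) * symB q 1 = symB q 0 + symB q 2 ∧
    symB q 2 ∈ Torsion (symB q) 0 ∧
    Torsion (symB q) 0 ≠ ∅ :=
  ⟨not_homogSet_apery_symA hq, not_homogSet_apery_symB hq, mul_symB_one_eq_add q,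
    symB_two_mem_torsion hq, Set.nonempty_iff_ne_empty.mp ⟨_, symB_two_mem_torsion hq⟩⟩
end

section
/- Let q be a positive integer. (a) For m = 2q+5, the numerical semigroup S generated by n_1 = m, n_2 = m+1, n_3 = (q+1)m+q+2, n_4 = (q+2)m−1 is homogeneous, i.e. every element of AP(S,m) has all its factorizations of the same length. (b) For m = 2q+4 and q > 1, the numerical semigroup S generated by n_1 = m, n_2 = m+1, n_3 = qm+2q+3, n_4 = (q+1)m+q+2 is not homogeneous; moreover n_4 + n_1 = (q+2)·n_2, so n_4 is a torsion element of S and T(S) ≠ ∅, i.e. the tangent cone of S is not Cohen–Macaulay. -/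
open scoped BigOperators

/-- The pseudo-symmetric family of multiplicity `m = 2q+5`. -/
def psA (q : ℕ) : Fin 4 → ℕ :=
  ![2 * q + 5, 2 * q + 6, (q + 1) * (2 * q + 5) + q + 2,
    (q + 2) * (2 * q + 5) - 1]

/-- The pseudo-symmetric family of multiplicity `m = 2q+4`. -/
def psB (q : ℕ) : Fin 4 → ℕ :=
  ![2 * q + 4, 2 * q + 5, q * (2 * q + 4) + 2 * q + 3,
    (q + 1) * (2 * q + 4) + q + 2]

/-!
The generators `n₁, n₂, n₃, n₄` are the entries `0, 1, 2, 3` of `psA q` and `psB q`.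

For `m = 2q + 5` the generators `n₂, n₃, n₄` have residues `1`, `q + 2`, `m - 1` modulo `m`, and
five relations whose right-hand side involves `n₁` force a factorization of an element of
`AP(S, m)` to be `j n₂`, `j n₂ + n₃` (with `j ≤ q + 1`) or `n₄`. These have pairwise distinct
residues, so every element of `AP(S, m)` has a unique factorization.

For `m = 2q + 4` the element `2 n₃ = q n₂ + n₄` lies in `AP(S, m)` and has factorizations of
lengths `2` and `q + 1`, while `n₄ + n₁ = (q + 2) n₂` makes `n₄` torsion, as `n₄` has order `1`.
Both the membership in `AP(S, m)` and the order reduce to the gaps of `⟨m, m + 1⟩`, because two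
generators among `n₃, n₄` already add up to at least `2 n₃`.
-/

section General

variable {d : ℕ} {n : Fin d → ℕ}

lemma ordS_le {s l : ℕ} (h : ∀ a, sval n a = s → tlen a ≤ l) : ordS n s ≤ l := by
  refine csSup_le' ?_
  rintro _ ⟨a, ha, rfl⟩
  exact h a ha

lemma mem_torsion_of_lt_tlen (hn : ∀ i, 0 < n i) {i : Fin d} {s c l : ℕ} {b : Fin d → ℕ}
    (hs : s ∈ gen n) (hl : ∀ a, sval n a = s → tlen a ≤ l) (hc : 0 < c)
    (hb : sval n b = s + c * n i) (hlt : l + c < tlen b) : s ∈ Torsion n i := by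
  refine ⟨hs, c, hc, ?_⟩
  calc ordS n s + c ≤ l + c := Nat.add_le_add_right (ordS_le hl) c
    _ < tlen b := hlt
    _ ≤ ordS n (s + c * n i) := hb ▸ tlen_le_ordS hn b

lemma not_le_of_sval_mem_apery {s : ℕ} {a u v : Fin d → ℕ} (ha : sval n a ∈ Apery n s)
    (huv : sval n u = s + sval n v) : ¬ u ≤ a := by
  intro hua
  refine ha.2 ⟨_, ⟨v + (a - u), rfl⟩, ?_⟩
  calc sval n a = sval n u + sval n (a - u) := by rw [← sval_add, add_tsub_cancel_of_le hua]
    _ = s + sval n (v + (a - u)) := by rw [huv, sval_add, add_assoc]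

lemma mul_add_mul_succ_ne {m x y k r : ℕ} (hkr : k < r) (hrm : r < m) :
    x * m + y * (m + 1) ≠ k * m + r := by
  intro h
  have hxy : x + y ≤ k := by
    refine Nat.lt_succ_iff.mp (Nat.lt_of_mul_lt_mul_right (a := m) ?_)
    linarith
  have hry : r ≤ y := by
    have := Nat.mul_le_mul_right m hxy
    linarith
  omega

end General

section FamilyA

variable {q : ℕ} {a b : Fin 4 → ℕ}

/-- The residue modulo `2q + 5` contributed by a tuple of coefficients of `psA q`, left unreduced:
the generators contribute `0`, `1`, `q + 2` and `2q + 4`. -/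
def psAResidue (q : ℕ) (a : Fin 4 → ℕ) : ℕ := a 1 + (q + 2) * a 2 + (2 * q + 4) * a 3

lemma psA_three (q : ℕ) : psA q 3 = (q + 1) * (2 * q + 5) + (2 * q + 4) := by
  change (q + 2) * (2 * q + 5) - 1 = _
  rw [Nat.sub_eq_iff_eq_add (by nlinarith)]
  ring

lemma sval_psA (q : ℕ) (a : Fin 4 → ℕ) :
    sval (psA q) a = (2 * q + 5) * (a 0 + a 1 + (q + 1) * (a 2 + a 3)) + psAResidue q a := by
  rw [sval, Fin.sum_univ_four, psA_three]
  simp only [psA, psAResidue, Matrix.cons_val]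
  ring

lemma psA_coeffs_of_mem_apery (ha : sval (psA q) a ∈ Apery (psA q) (psA q 0)) :
    a 0 = 0 ∧ (a 1 ≤ q + 1 ∧ a 2 = 0 ∧ a 3 = 0 ∨ a 1 ≤ q + 1 ∧ a 2 = 1 ∧ a 3 = 0 ∨
      a 1 = 0 ∧ a 2 = 0 ∧ a 3 = 1) := by
  have not_le (u v : Fin 4 → ℕ) (huv : sval (psA q) u = 2 * q + 5 + sval (psA q) v) :
      ¬ (u 0 ≤ a 0 ∧ u 1 ≤ a 1 ∧ u 2 ≤ a 2 ∧ u 3 ≤ a 3) := by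
    simpa [Pi.le_def, Fin.forall_fin_succ] using not_le_of_sval_mem_apery ha huv
  have h_n₁ := not_le ![1, 0, 0, 0] ![0, 0, 0, 0]
    (by simp only [sval_psA, psAResidue, Matrix.cons_val]; ring)
  have h_n₂ := not_le ![0, q + 2, 0, 0] ![0, 0, 1, 0]
    (by simp only [sval_psA, psAResidue, Matrix.cons_val]; ring)
  have h_n₃ := not_le ![0, 0, 2, 0] ![q, 0, 0, 1]
    (by simp only [sval_psA, psAResidue, Matrix.cons_val]; ring)
  have h_n₄ := not_le ![0, 0, 0, 2] ![0, q + 1, 1, 0]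
    (by simp only [sval_psA, psAResidue, Matrix.cons_val]; ring)
  have h_n₂n₄ := not_le ![0, 1, 0, 1] ![q + 2, 0, 0, 0]
    (by simp only [sval_psA, psAResidue, Matrix.cons_val]; ring)
  have h_n₃n₄ := not_le ![0, 0, 1, 1] ![q + 1, q + 1, 0, 0]
    (by simp only [sval_psA, psAResidue, Matrix.cons_val]; ring)
  simp only [Matrix.cons_val] at h_n₁ h_n₂ h_n₃ h_n₄ h_n₂n₄ h_n₃n₄
  omega

lemma sval_psA_mod_of_mem_apery (ha : sval (psA q) a ∈ Apery (psA q) (psA q 0)) :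
    sval (psA q) a % (2 * q + 5) = psAResidue q a := by
  have hlt : psAResidue q a < 2 * q + 5 := by
    obtain ⟨-, ⟨h₁, h₂, h₃⟩ | ⟨h₁, h₂, h₃⟩ | ⟨h₁, h₂, h₃⟩⟩ := psA_coeffs_of_mem_apery ha <;>
      rw [psAResidue, h₂, h₃] <;> omega
  rw [sval_psA, Nat.mul_add_mod, Nat.mod_eq_of_lt hlt]

lemma psA_factorization_unique_of_mem_apery (ha : sval (psA q) a ∈ Apery (psA q) (psA q 0))
    (hab : sval (psA q) a = sval (psA q) b) : a = b := by
  have hb := hab ▸ ha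
  have hres : psAResidue q a = psAResidue q b := by
    rw [← sval_psA_mod_of_mem_apery ha, hab, sval_psA_mod_of_mem_apery hb]
  obtain ⟨ha₀, ha'⟩ := psA_coeffs_of_mem_apery ha
  obtain ⟨hb₀, hb'⟩ := psA_coeffs_of_mem_apery hb
  have hcoeffs : a 1 = b 1 ∧ a 2 = b 2 ∧ a 3 = b 3 := by
    simp only [psAResidue] at hres
    rcases ha' with ⟨h₁, h₂, h₃⟩ | ⟨h₁, h₂, h₃⟩ | ⟨h₁, h₂, h₃⟩ <;>
      rcases hb' with ⟨k₁, k₂, k₃⟩ | ⟨k₁, k₂, k₃⟩ | ⟨k₁, k₂, k₃⟩ <;>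
        rw [h₂, h₃, k₂, k₃] at hres <;> omega
  ext i
  fin_cases i
  exacts [ha₀.trans hb₀.symm, hcoeffs.1, hcoeffs.2.1, hcoeffs.2.2]

lemma homogSet_psA (q : ℕ) : HomogSet (psA q) (Apery (psA q) (psA q 0)) := by
  rintro _ ht - a b rfl hb
  rw [psA_factorization_unique_of_mem_apery ht hb.symm]

end FamilyA

section FamilyB

variable {q : ℕ} {a : Fin 4 → ℕ}

lemma sval_psB (q : ℕ) (a : Fin 4 → ℕ) :
    sval (psB q) a = a 0 * (2 * q + 4) + a 1 * (2 * q + 5) +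
      a 2 * (q * (2 * q + 4) + 2 * q + 3) + a 3 * ((q + 1) * (2 * q + 4) + q + 2) := by
  simp [sval, psB, Fin.sum_univ_four]

lemma psB_pos (q : ℕ) (i : Fin 4) : 0 < psB q i := by
  fin_cases i <;> simp [psB]

lemma psB_zero (q : ℕ) : psB q 0 = 2 * q + 4 := rfl

lemma psB_two (q : ℕ) : psB q 2 = q * (2 * q + 4) + 2 * q + 3 := rfl

lemma psB_three (q : ℕ) : psB q 3 = (q + 1) * (2 * q + 4) + q + 2 := rfl

lemma psB_two_le_psB_three (q : ℕ) : psB q 2 ≤ psB q 3 := by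
  rw [psB_two, psB_three]
  linarith

lemma psB_coeffs_of_sval_lt (h : sval (psB q) a < 2 * psB q 2) :
    a 2 = 0 ∧ a 3 = 0 ∨ a 2 = 1 ∧ a 3 = 0 ∨ a 2 = 0 ∧ a 3 = 1 := by
  have hle : (a 2 + a 3) * psB q 2 ≤ sval (psB q) a := by
    rw [sval, Fin.sum_univ_four]
    nlinarith [Nat.mul_le_mul_left (a 3) (psB_two_le_psB_three q)]
  have := Nat.lt_of_mul_lt_mul_right (hle.trans_lt h)
  omega

lemma two_mul_psB_two_mem_apery (hq : 0 < q) : 2 * psB q 2 ∈ Apery (psB q) (psB q 0) := by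
  refine ⟨⟨Pi.single 2 2, (sval_single _ _ _).symm⟩, ?_⟩
  rintro ⟨_, ⟨a, rfl⟩, h⟩
  have hlt : sval (psB q) a < 2 * psB q 2 := h ▸ Nat.lt_add_of_pos_left (psB_pos q 0)
  rw [sval_psB, psB_zero, psB_two] at h
  obtain ⟨p, rfl⟩ := Nat.exists_eq_add_of_le' hq
  -- Removing `n₃` or `n₄`, if used, from `2 n₃ - n₁` leaves `k m + r` with `k < r < m`.
  rcases psB_coeffs_of_sval_lt hlt with ⟨h₂, h₃⟩ | ⟨h₂, h₃⟩ | ⟨h₂, h₃⟩ <;> rw [h₂, h₃] at h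
  · exact mul_add_mul_succ_ne (m := 2 * p + 6) (x := a 0) (y := a 1) (k := 2 * p + 2)
      (r := 2 * p + 4) (by omega) (by omega) (by linarith)
  · exact mul_add_mul_succ_ne (m := 2 * p + 6) (x := a 0) (y := a 1) (k := p)
      (r := 2 * p + 5) (by omega) (by omega) (by linarith)
  · exact mul_add_mul_succ_ne (m := 2 * p + 6) (x := a 0) (y := a 1) (k := p)
      (r := p + 1) (by omega) (by omega) (by linarith)

lemma tlen_eq_one_of_sval_eq_psB_three (hq : 0 < q) (h : sval (psB q) a = psB q 3) :
    tlen a = 1 := by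
  have hlt : sval (psB q) a < 2 * psB q 2 := by
    rw [h, psB_two, psB_three]
    nlinarith
  rw [sval_psB, psB_three] at h
  rw [tlen, Fin.sum_univ_four]
  rcases psB_coeffs_of_sval_lt hlt with ⟨h₂, h₃⟩ | ⟨h₂, h₃⟩ | ⟨h₂, h₃⟩ <;> rw [h₂, h₃] at h ⊢
  · exact (mul_add_mul_succ_ne (m := 2 * q + 4) (x := a 0) (y := a 1) (k := q + 1)
      (r := q + 2) (by omega) (by omega) (by linarith)).elim
  · exact (mul_add_mul_succ_ne (m := 2 * q + 4) (x := a 0) (y := a 1) (k := 0)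
      (r := q + 3) (by omega) (by omega) (by linarith)).elim
  · have : a 0 = 0 ∧ a 1 = 0 := by constructor <;> nlinarith
    omega

lemma two_mul_psB_two (q : ℕ) : 2 * psB q 2 = q * psB q 1 + psB q 3 := by
  simp only [psB, Matrix.cons_val]
  ring

lemma not_homogSet_psB (hq : 1 < q) : ¬ HomogSet (psB q) (Apery (psB q) (psB q 0)) := by
  intro H
  have hfact : sval (psB q) ![0, q, 0, 1] = 2 * psB q 2 := by
    simp [two_mul_psB_two, sval, Fin.sum_univ_four]
  have hne : 2 * psB q 2 ≠ 0 := Nat.mul_ne_zero two_ne_zero (psB_pos q 2).ne'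
  have hlen := H _ (two_mul_psB_two_mem_apery (by omega)) hne _ _ hfact (sval_single _ 2 2)
  rw [tlen_single, tlen, Fin.sum_univ_four] at hlen
  simp only [Matrix.cons_val] at hlen
  omega

lemma psB_three_add_psB_zero (q : ℕ) : psB q 3 + psB q 0 = (q + 2) * psB q 1 := by
  simp only [psB, Matrix.cons_val]
  ring

lemma psB_three_mem_torsion (hq : 0 < q) : psB q 3 ∈ Torsion (psB q) 0 := by
  refine mem_torsion_of_lt_tlen (psB_pos q) (c := 1) (b := Pi.single 1 (q + 2))
    ⟨Pi.single 3 1, by rw [sval_single, one_mul]⟩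
    (fun a ha => (tlen_eq_one_of_sval_eq_psB_three hq ha).le) one_pos ?_ ?_
  · rw [sval_single, one_mul, psB_three_add_psB_zero]
  · rw [tlen_single]
    omega

end FamilyB

theorem statement12_general (q : ℕ) :
    HomogSet (psA q) (Apery (psA q) (psA q 0)) ∧
    (1 < q → ¬ HomogSet (psB q) (Apery (psB q) (psB q 0))) ∧
    psB q 3 + psB q 0 = (q + 2) * psB q 1 ∧
    (0 < q → psB q 3 ∈ Torsion (psB q) 0) :=
  ⟨homogSet_psA q, not_homogSet_psB, psB_three_add_psB_zero q, psB_three_mem_torsion⟩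

/-- the pseudo-symmetric family with `m = 2q+5` is homogeneous;
the one with `m = 2q+4` and `q > 1` is not homogeneous, `n₄ + n₁ = (q+2)·n₂`,
`n₄` is a torsion element and `T(S) ≠ ∅` (the tangent cone is not
Cohen–Macaulay). -/
theorem statement12 (q : ℕ) (hq : 0 < q) :
    HomogSet (psA q) (Apery (psA q) (psA q 0)) ∧
    (1 < q →
      ¬ HomogSet (psB q) (Apery (psB q) (psB q 0)) ∧
      psB q 3 + psB q 0 = (q + 2) * psB q 1 ∧
      psB q 3 ∈ Torsion (psB q) 0 ∧
      Torsion (psB q) 0 ≠ ∅) := by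
  obtain ⟨hA, hB, hrel, htor⟩ := statement12_general q
  exact ⟨hA, fun h => ⟨hB h, hrel, htor hq, Set.Nonempty.ne_empty ⟨_, htor hq⟩⟩⟩
end

section
/- Let S be the gluing of numerical semigroups S_1 and S_2 determined by p ∈ S_1 and q ∈ S_2. Then for every s ∈ S_1: (1) AP(S, qs) = {q·z_1 + p·z_2 : z_1 ∈ AP(S_1,s), z_2 ∈ AP(S_2,q)}; (2) if q·z_1 + p·z_2 ∈ AP(S, qs) with z_1 ∈ S_1 and z_2 ∈ S_2, then z_1 ∈ AP(S_1,s); (3) if p ∉ AP(S_1,s), then every z ∈ AP(S, qs) can be written as z = q·z_1 + p·z_2 with z_1 ∈ S_1 and z_2 ∈ S_2 in a unique way; (4) if q·z_1 + p·z_2 ∈ AP(S, qs) with z_1 ∈ S_1, z_2 ∈ S_2 and p ∉ AP(S_1,s), then z_2 ∈ AP(S_2,q). -/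
open scoped BigOperators

/-!
Since `p` and `q` are coprime, any two expressions `z = q * z₁ + p * z₂` of an element of the gluing
differ by a multiple of `(p, -q)`. As `p ∈ S₁`, copies of `q` can be traded out of `z₂` until
`z₂ ∈ AP(S₂, q)`; such a `z₂` is the least element of `S₂` in its class modulo `q`, so the resulting
expression is unique and has the largest possible `z₁`. Hence `z - q * s` lies in the gluing exactly
when `z₁ - s` lies in `S₁`. If moreover `p ∉ AP(S₁, s)` and `z ∈ AP(S, q * s)`, then no trade is
possible: it would put `z₁ + p` into `AP(S₁, s)`, and `p` with it.
-/

section Generation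

open scoped Pointwise

variable {d e : ℕ} {n : Fin d → ℕ} {x y : ℕ}

theorem gen_eq_span (n : Fin d → ℕ) : gen n = (Submodule.span ℕ (Set.range n) : Set ℕ) := by
  ext x
  simp only [gen, sval, Set.mem_ofPred_eq, SetLike.mem_coe, Submodule.mem_span_range_iff_exists_fun,
    smul_eq_mul, eq_comm]

theorem add_mem_gen (hx : x ∈ gen n) (hy : y ∈ gen n) : x + y ∈ gen n := by
  rw [gen_eq_span] at *
  exact add_mem hx hy

theorem mul_mem_gen (k : ℕ) (hx : x ∈ gen n) : k * x ∈ gen n := by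
  rw [gen_eq_span] at *
  exact Submodule.smul_mem _ k hx

theorem gen_const_mul (q : ℕ) (n : Fin d → ℕ) : gen (fun i => q * n i) = (q * ·) '' gen n := by
  have sval_const_mul (a : Fin d → ℕ) : sval (fun i => q * n i) a = q * sval n a := by
    simp only [sval, Finset.mul_sum, mul_left_comm]
  ext x
  simp [gen, sval_const_mul, eq_comm]

theorem gen_append (m : Fin d → ℕ) (n : Fin e → ℕ) : gen (Fin.append m n) = gen m + gen n := by
  have range_append : Set.range (Fin.append m n) = Set.range m ∪ Set.range n := by
    rw [← Set.Sum.elim_range, ← finSumFinEquiv.surjective.range_comp]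
    congr 1
    ext (i | j) <;> simp
  simp only [gen_eq_span, range_append, Submodule.span_union, Submodule.coe_sup]

theorem mem_gen_glueGen {mg : Fin d → ℕ} {ng : Fin e → ℕ} {p q z : ℕ} :
    z ∈ gen (glueGen mg ng p q) ↔ ∃ z₁ ∈ gen mg, ∃ z₂ ∈ gen ng, z = q * z₁ + p * z₂ := by
  simp [glueGen, gen_append, gen_const_mul, Set.mem_add, eq_comm]

end Generation

section Apery

variable {d : ℕ} {n : Fin d → ℕ} {q x y : ℕ}

theorem mem_apery_of_add_mem_apery {s : ℕ} (hx : x ∈ gen n) (hy : y ∈ gen n)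
    (h : x + y ∈ Apery n s) : y ∈ Apery n s := by
  refine ⟨hy, ?_⟩
  rintro ⟨t, ht, rfl⟩
  exact h.2 ⟨x + t, add_mem_gen hx ht, by ring⟩

theorem exists_mem_apery_add_mul (hq : 0 < q) (hx : x ∈ gen n) :
    ∃ w ∈ Apery n q, ∃ k, x = w + q * k := by
  induction x using Nat.strong_induction_on with
  | _ x ih =>
    by_cases h : ∃ y ∈ gen n, x = q + y
    · obtain ⟨y, hy, rfl⟩ := h
      obtain ⟨w, hw, k, rfl⟩ := ih y (by omega) hy
      exact ⟨w, hw, k + 1, by ring⟩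
    · exact ⟨x, ⟨hx, h⟩, 0, rfl⟩

theorem le_of_mem_apery_of_modEq (hq : q ∈ gen n) (hx : x ∈ Apery n q) (hy : y ∈ gen n)
    (hxy : x ≡ y [MOD q]) : x ≤ y := by
  by_contra! hlt
  obtain ⟨k, hk⟩ := (Nat.modEq_iff_dvd' hlt.le).1 hxy.symm
  obtain ⟨j, rfl⟩ : ∃ j, k = j + 1 := Nat.exists_eq_succ_of_ne_zero (by rintro rfl; omega)
  refine hx.2 ⟨y + j * q, add_mem_gen hy (mul_mem_gen j hq), ?_⟩
  rw [← Nat.sub_add_cancel hlt.le, hk]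
  ring

theorem eq_of_mem_apery_of_modEq (hq : q ∈ gen n) (hx : x ∈ Apery n q) (hy : y ∈ Apery n q)
    (hxy : x ≡ y [MOD q]) : x = y :=
  (le_of_mem_apery_of_modEq hq hx hy.1 hxy).antisymm
    (le_of_mem_apery_of_modEq hq hy hx.1 hxy.symm)

end Apery

theorem modEq_of_mul_add_mul_eq {p q a b a' b' : ℕ} (hpq : p.Coprime q)
    (h : q * a + p * b = q * a' + p * b') : b ≡ b' [MOD q] := by
  have hmul : p * b ≡ p * b' [MOD q] := by
    simpa [Nat.ModEq] using congrArg (· % q) h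
  exact hmul.cancel_left_of_coprime hpq.symm

section Gluing

variable {d e : ℕ} {mg : Fin d → ℕ} {ng : Fin e → ℕ} {p q s z z₁ z₂ : ℕ}

theorem left_mem_apery_of_mem_apery_glueGen (hz₁ : z₁ ∈ gen mg) (hz₂ : z₂ ∈ gen ng)
    (hz : q * z₁ + p * z₂ ∈ Apery (glueGen mg ng p q) (q * s)) : z₁ ∈ Apery mg s := by
  refine ⟨hz₁, ?_⟩
  rintro ⟨y, hy, rfl⟩
  exact hz.2 ⟨q * y + p * z₂, mem_gen_glueGen.2 ⟨y, hy, z₂, hz₂, rfl⟩, by ring⟩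

theorem right_mem_apery_of_mem_apery_glueGen (hp : p ∈ gen mg) (hps : p ∉ Apery mg s)
    (hz₁ : z₁ ∈ gen mg) (hz₂ : z₂ ∈ gen ng)
    (hz : q * z₁ + p * z₂ ∈ Apery (glueGen mg ng p q) (q * s)) : z₂ ∈ Apery ng q := by
  refine ⟨hz₂, ?_⟩
  rintro ⟨y, hy, rfl⟩
  have trade : q * z₁ + p * (q + y) = q * (z₁ + p) + p * y := by ring
  have hzp : z₁ + p ∈ Apery mg s :=
    left_mem_apery_of_mem_apery_glueGen (add_mem_gen hz₁ hp) hy (trade ▸ hz)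
  exact hps (mem_apery_of_add_mem_apery hz₁ hp hzp)

theorem exists_right_mem_apery_of_mem_gen_glueGen (hp : p ∈ gen mg) (hq : 0 < q)
    (hz : z ∈ gen (glueGen mg ng p q)) :
    ∃ z₁ ∈ gen mg, ∃ z₂ ∈ Apery ng q, z = q * z₁ + p * z₂ := by
  obtain ⟨z₁, hz₁, z₂, hz₂, rfl⟩ := mem_gen_glueGen.1 hz
  obtain ⟨w, hw, k, rfl⟩ := exists_mem_apery_add_mul hq hz₂
  exact ⟨z₁ + k * p, add_mem_gen hz₁ (mul_mem_gen k hp), w, hw, by ring⟩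

theorem mul_add_mul_mem_apery_glueGen (hp : p ∈ gen mg) (hq : q ∈ gen ng) (hq0 : 0 < q)
    (hpq : p.Coprime q) (hz₁ : z₁ ∈ Apery mg s) (hz₂ : z₂ ∈ Apery ng q) :
    q * z₁ + p * z₂ ∈ Apery (glueGen mg ng p q) (q * s) := by
  refine ⟨mem_gen_glueGen.2 ⟨z₁, hz₁.1, z₂, hz₂.1, rfl⟩, ?_⟩
  rintro ⟨y, hy, hzy⟩
  obtain ⟨w₁, hw₁, w₂, hw₂, rfl⟩ := mem_gen_glueGen.1 hy
  have hz_eq : q * z₁ + p * z₂ = q * (s + w₁) + p * w₂ := by rw [hzy]; ring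
  have hmod : z₂ ≡ w₂ [MOD q] := modEq_of_mul_add_mul_eq hpq hz_eq
  have hle : z₂ ≤ w₂ := le_of_mem_apery_of_modEq hq hz₂ hw₂ hmod
  obtain ⟨k, hk⟩ := (Nat.modEq_iff_dvd' hle).1 hmod
  obtain rfl : w₂ = z₂ + q * k := by omega
  have hz₁_eq : z₁ = s + (w₁ + k * p) := Nat.eq_of_mul_eq_mul_left hq0 (by linarith)
  exact hz₁.2 ⟨w₁ + k * p, add_mem_gen hw₁ (mul_mem_gen k hp), hz₁_eq⟩

theorem apery_glueGen (hp : p ∈ gen mg) (hq : q ∈ gen ng) (hq0 : 0 < q) (hpq : p.Coprime q)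
    (s : ℕ) :
    Apery (glueGen mg ng p q) (q * s) =
      {z | ∃ z₁ ∈ Apery mg s, ∃ z₂ ∈ Apery ng q, z = q * z₁ + p * z₂} := by
  ext z
  constructor
  · intro hz
    obtain ⟨z₁, hz₁, z₂, hz₂, rfl⟩ := exists_right_mem_apery_of_mem_gen_glueGen hp hq0 hz.1
    exact ⟨z₁, left_mem_apery_of_mem_apery_glueGen hz₁ hz₂.1 hz, z₂, hz₂, rfl⟩
  · rintro ⟨z₁, hz₁, z₂, hz₂, rfl⟩
    exact mul_add_mul_mem_apery_glueGen hp hq hq0 hpq hz₁ hz₂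

theorem eq_and_eq_of_mul_add_mul_eq_of_mem_apery {w₁ w₂ : ℕ} (hq : q ∈ gen ng) (hq0 : 0 < q)
    (hpq : p.Coprime q) (hz₂ : z₂ ∈ Apery ng q) (hw₂ : w₂ ∈ Apery ng q)
    (h : q * z₁ + p * z₂ = q * w₁ + p * w₂) : w₁ = z₁ ∧ w₂ = z₂ := by
  obtain rfl : z₂ = w₂ := eq_of_mem_apery_of_modEq hq hz₂ hw₂ (modEq_of_mul_add_mul_eq hpq h)
  exact ⟨(Nat.eq_of_mul_eq_mul_left hq0 (Nat.add_right_cancel h)).symm, rfl⟩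

theorem statement13_general (hp : p ∈ gen mg) (hq : q ∈ gen ng) (hq0 : 0 < q) (hpq : p.Coprime q)
    (s : ℕ) :
    (Apery (glueGen mg ng p q) (q * s) =
      {z : ℕ | ∃ z1 ∈ Apery mg s, ∃ z2 ∈ Apery ng q, z = q * z1 + p * z2}) ∧
    (∀ z1 ∈ gen mg, ∀ z2 ∈ gen ng,
      q * z1 + p * z2 ∈ Apery (glueGen mg ng p q) (q * s) → z1 ∈ Apery mg s) ∧
    (p ∉ Apery mg s →
      ∀ z ∈ Apery (glueGen mg ng p q) (q * s),
        ∃ z1 z2 : ℕ, z1 ∈ gen mg ∧ z2 ∈ gen ng ∧ z = q * z1 + p * z2 ∧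
          ∀ w1 w2 : ℕ, w1 ∈ gen mg → w2 ∈ gen ng → z = q * w1 + p * w2 → w1 = z1 ∧ w2 = z2) ∧
    (p ∉ Apery mg s →
      ∀ z1 ∈ gen mg, ∀ z2 ∈ gen ng,
        q * z1 + p * z2 ∈ Apery (glueGen mg ng p q) (q * s) → z2 ∈ Apery ng q) := by
  refine ⟨apery_glueGen hp hq hq0 hpq s,
    fun _ hz₁ _ hz₂ => left_mem_apery_of_mem_apery_glueGen hz₁ hz₂, fun hps z hz => ?_,
    fun hps _ hz₁ _ hz₂ => right_mem_apery_of_mem_apery_glueGen hp hps hz₁ hz₂⟩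
  obtain ⟨z₁, hz₁, z₂, hz₂, rfl⟩ := exists_right_mem_apery_of_mem_gen_glueGen hp hq0 hz.1
  refine ⟨z₁, z₂, hz₁, hz₂.1, rfl, fun w₁ w₂ hw₁ hw₂ h => ?_⟩
  have hw₂_apery : w₂ ∈ Apery ng q :=
    right_mem_apery_of_mem_apery_glueGen hp hps hw₁ hw₂ (h ▸ hz)
  exact eq_and_eq_of_mul_add_mul_eq_of_mem_apery hq hq0 hpq hz₂ hw₂_apery h

end Gluing

/-- Apéry sets of a gluing `S = ⟨q·S₁, p·S₂⟩`. -/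
theorem statement13
    {d e : ℕ} (hd : 0 < d) (he : 0 < e)
    (mg : Fin d → ℕ) (ng : Fin e → ℕ)
    (hmmono : StrictMono mg) (hnmono : StrictMono ng)
    (hmpos : 0 < mg ⟨0, hd⟩) (hnpos : 0 < ng ⟨0, he⟩)
    (hmnum : IsNumerical mg) (hnnum : IsNumerical ng)
    (hmmin : MinGen mg) (hnmin : MinGen ng)
    (p q : ℕ) (hp : p ∈ gen mg) (hq : q ∈ gen ng)
    (hp0 : 0 < p) (hq0 : 0 < q) (hcop : Nat.Coprime p q)
    (hpn : p ∉ Set.range mg) (hqn : q ∉ Set.range ng)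
    (s : ℕ) (hs : s ∈ gen mg) :
    (Apery (glueGen mg ng p q) (q * s) =
      {z : ℕ | ∃ z1 ∈ Apery mg s, ∃ z2 ∈ Apery ng q, z = q * z1 + p * z2}) ∧
    (∀ z1 ∈ gen mg, ∀ z2 ∈ gen ng,
      q * z1 + p * z2 ∈ Apery (glueGen mg ng p q) (q * s) →
        z1 ∈ Apery mg s) ∧
    (p ∉ Apery mg s →
      ∀ z ∈ Apery (glueGen mg ng p q) (q * s),
        ∃ z1 z2 : ℕ, z1 ∈ gen mg ∧ z2 ∈ gen ng ∧ z = q * z1 + p * z2 ∧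
          ∀ w1 w2 : ℕ, w1 ∈ gen mg → w2 ∈ gen ng → z = q * w1 + p * w2 →
            w1 = z1 ∧ w2 = z2) ∧
    (p ∉ Apery mg s →
      ∀ z1 ∈ gen mg, ∀ z2 ∈ gen ng,
        q * z1 + p * z2 ∈ Apery (glueGen mg ng p q) (q * s) →
          z2 ∈ Apery ng q) :=
  statement13_general hp hq hq0 hcop s
end

section
/- Let S be a numerical semigroup minimally generated by n_1 < … < n_d, set m_i = n_d − n_i for 1 ≤ i ≤ d−1, g = gcd(m_1,…,m_{d−1}), let c be the conductor of T = ⟨m_1/g,…,m_{d−1}/g⟩ and L = m_1·m_2·((g·c + d·m_1)/m_{d−1} + d) − n_d. Let j > L be an integer and let s be an element of the shifted semigroup S+j = ⟨n_1+j,…,n_d+j⟩. If a and a' are factorizations of s with respect to the generators n_1+j,…,n_d+j with |a| > |a'|, then there exists a factorization b of s with |b| = |a| and b_1 ≠ 0. -/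
open scoped BigOperators

/-!
Taking away `n q - n p` copies of `n i` and putting back `n q - n i` copies of the smallest
generator `n p` and `n i - n p` copies of the largest one `n q` changes neither value nor length.
A factorization therefore only needs some `a i ≥ n q - n p` with `n i < n q`.
The deficit `∑ a i * (n q - n i) = |a| * n q - s` of a factorization of non-minimal length is at
least `n q`. If no such `i` existed and `n p` were unused, it would be bounded in terms of the
differences `n q - n i` alone, and these are invariant under the shift by `j` while `n q` grows.
-/

section Factorization

variable {d : ℕ} {n : Fin d → ℕ} {p q i : Fin d} {a : Fin d → ℕ}

theorem sval_eq_dotProduct (n a : Fin d → ℕ) : sval n a = a ⬝ᵥ n := rfl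

theorem tlen_eq_dotProduct_one (a : Fin d → ℕ) : tlen a = a ⬝ᵥ 1 := (dotProduct_one a).symm

theorem sval_add_sval_sub (hq : ∀ i, n i ≤ n q) (a : Fin d → ℕ) :
    sval n a + sval (fun i => n q - n i) a = tlen a * n q := by
  simp only [sval, tlen, ← Finset.sum_add_distrib, Finset.sum_mul, ← mul_add,
    Nat.add_sub_cancel' (hq _)]

theorem le_sval_sub_of_tlen_lt {a' : Fin d → ℕ} (hq : ∀ i, n i ≤ n q)
    (h : sval n a' = sval n a) (hlen : tlen a' < tlen a) :
    n q ≤ sval (fun i => n q - n i) a := by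
  have hmul : (tlen a' + 1) * n q ≤ tlen a * n q := Nat.mul_le_mul_right _ hlen
  rw [add_mul, one_mul, ← sval_add_sval_sub hq, ← sval_add_sval_sub hq] at hmul
  omega

theorem exists_lt_coeff_of_mul_sum_lt_sval {m : Fin d → ℕ} {C : ℕ} (hp : a p = 0)
    (h : C * ∑ i with i ≠ p, m i < sval m a) : ∃ i, C < a i ∧ 0 < m i := by
  have hsum : sval m a = ∑ i with i ≠ p, a i * m i :=
    (Finset.sum_filter_of_ne fun i _ hi => by rintro rfl; simp [hp] at hi).symm
  rw [hsum, Finset.mul_sum] at h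
  obtain ⟨i, -, hi⟩ := Finset.exists_lt_of_sum_lt h
  exact ⟨i, Nat.lt_of_mul_lt_mul_right hi, Nat.pos_of_mul_pos_left (Nat.zero_lt_of_lt hi)⟩

theorem exists_sval_eq_tlen_eq_coeff_ne_zero (hpi : n p ≤ n i) (hiq : n i < n q)
    (hai : n q - n p ≤ a i) : ∃ b, sval n b = sval n a ∧ tlen b = tlen a ∧ b p ≠ 0 := by
  obtain ⟨u, hu⟩ := Nat.exists_eq_add_of_le hpi
  obtain ⟨v, hv⟩ := Nat.exists_eq_add_of_le hiq.le
  have hqp : n q - n p = u + v := by omega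
  have hsingle : Pi.single i (u + v) ≤ a :=
    update_le_iff.2 ⟨hqp ▸ hai, fun _ _ => Nat.zero_le _⟩
  obtain ⟨r, rfl⟩ := exists_add_of_le hsingle
  refine ⟨Pi.single p v + Pi.single q u + r, ?_, ?_, ?_⟩
  · simp only [sval_eq_dotProduct, add_dotProduct, single_dotProduct]
    rw [hv, hu]
    ring
  · simp only [tlen_eq_dotProduct_one, add_dotProduct, single_dotProduct, Pi.one_apply, mul_one]
    ring
  · simp only [Pi.add_apply, Pi.single_eq_same]
    omega

end Factorization

theorem mul_sum_sub_lt_of_mul_sub_lt {d : ℕ} {n : Fin d → ℕ} {p o q : Fin d}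
    (ho : ∀ i ≠ p, n o ≤ n i) {j : ℕ} {r : ℚ} (hr : 0 ≤ r)
    (hj : ((n q - n p : ℕ) : ℚ) * ((n q - n o : ℕ) : ℚ) * (r + d) - n q < j) :
    (n q - n p) * ∑ i with i ≠ p, (n q - n i) < n q + j := by
  have hsum : ∑ i with i ≠ p, (n q - n i) ≤ (n q - n o) * d := calc
    _ ≤ Finset.card {i | i ≠ p} • (n q - n o) :=
      Finset.sum_le_card_nsmul _ _ _ fun i hi =>
        Nat.sub_le_sub_left (ho i (Finset.mem_filter.1 hi).2) _
    _ ≤ (n q - n o) * d := by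
      rw [smul_eq_mul, mul_comm]
      exact Nat.mul_le_mul_left _ (card_finset_fin_le _)
  have hlt : (n q - n p) * ((n q - n o) * d) < n q + j := by
    have hr' : 0 ≤ ((n q - n p : ℕ) : ℚ) * ((n q - n o : ℕ) : ℚ) * r := by positivity
    have hcast : ((n q - n p : ℕ) : ℚ) * (((n q - n o : ℕ) : ℚ) * d) < n q + j := by linarith
    exact_mod_cast hcast
  exact (Nat.mul_le_mul_left _ hsum).trans_lt hlt

theorem statement18_general {d : ℕ} {n : Fin d → ℕ} {p q : Fin d}
    (hp : ∀ i, n p ≤ n i) (hq : ∀ i, n i ≤ n q) {j : ℕ}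
    (hj : (n q - n p) * ∑ i with i ≠ p, (n q - n i) < n q + j) {s : ℕ} {a a' : Fin d → ℕ}
    (ha : sval (fun i => n i + j) a = s) (ha' : sval (fun i => n i + j) a' = s)
    (hlen : tlen a' < tlen a) :
    ∃ b, sval (fun i => n i + j) b = s ∧ tlen b = tlen a ∧ b p ≠ 0 := by
  by_cases h0 : a p = 0
  · have hdeficit : n q + j ≤ sval (fun i => n q - n i) a := by
      simpa only [Nat.add_sub_add_right] using le_sval_sub_of_tlen_lt (q := q)
        (fun i => Nat.add_le_add_right (hq i) j) (ha'.trans ha.symm) hlen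
    obtain ⟨i, hai, hiq⟩ := exists_lt_coeff_of_mul_sum_lt_sval h0 (hj.trans_le hdeficit)
    rw [← ha]
    exact exists_sval_eq_tlen_eq_coeff_ne_zero (q := q) (Nat.add_le_add_right (hp i) j)
      (Nat.add_lt_add_right (Nat.sub_pos_iff_lt.1 hiq) j)
      (by simpa only [Nat.add_sub_add_right] using hai.le)
  · exact ⟨a, ha, rfl, h0⟩

/-- for `j > L`, any factorization in `S+j` of non-maximal
length can be matched by a factorization of the larger length whose first
coordinate is nonzero. -/
theorem statement18
    {d : ℕ} (hd : 2 ≤ d) (n : Fin d → ℕ)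
    (hmono : StrictMono n) (hpos : 0 < n ⟨0, by omega⟩)
    (hnum : IsNumerical n) (hmin : MinGen n)
    (g c : ℕ)
    (hg : g = (Finset.univ.filter (fun i : Fin d => (i : ℕ) < d - 1)).gcd
      (fun i => n ⟨d - 1, by omega⟩ - n i))
    (hc : c = sInf {c' : ℕ | ∀ x : ℕ, c' ≤ x →
      x ∈ gen (fun i : Fin d => (n ⟨d - 1, by omega⟩ - n i) / g)})
    (L : ℚ)
    (hL : L = ((n ⟨d - 1, by omega⟩ - n ⟨0, by omega⟩ : ℕ) : ℚ) *
        ((n ⟨d - 1, by omega⟩ - n ⟨1, by omega⟩ : ℕ) : ℚ) *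
        (((g : ℚ) * (c : ℚ) +
            (d : ℚ) * ((n ⟨d - 1, by omega⟩ - n ⟨0, by omega⟩ : ℕ) : ℚ)) /
            ((n ⟨d - 1, by omega⟩ - n ⟨d - 2, by omega⟩ : ℕ) : ℚ) + (d : ℚ)) -
        ((n ⟨d - 1, by omega⟩ : ℕ) : ℚ))
    (j : ℕ) (hj : L < (j : ℚ))
    (s : ℕ) (a a' : Fin d → ℕ)
    (ha : sval (fun i => n i + j) a = s) (ha' : sval (fun i => n i + j) a' = s)
    (hlen : tlen a' < tlen a) :
    ∃ b : Fin d → ℕ, sval (fun i => n i + j) b = s ∧ tlen b = tlen a ∧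
      b ⟨0, by omega⟩ ≠ 0 := by
  have ho (i : Fin d) (hi : i ≠ ⟨0, by omega⟩) : n ⟨1, by omega⟩ ≤ n i :=
    hmono.monotone (Nat.pos_of_ne_zero fun h => hi (Fin.ext h))
  exact statement18_general (fun i => hmono.monotone (Nat.zero_le i))
    (fun i => hmono.monotone (Nat.le_sub_one_of_lt i.2))
    (mul_sum_sub_lt_of_mul_sub_lt ho (by positivity) (hL ▸ hj)) ha ha' hlen
end
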